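/- arXiv:1306.2133 — 2 statements merged into one kernel-verified Lean document; each statement's English description precedes it below -/
import Mathlib

section
/- Let k ≥ 2 be an integer and set n := k−1. Let q : (0,1] → ℝ be absolutely continuous on every compact subinterval of (0,1] with q(x) = −∫_x^1 q'(t) dt for all x ∈ (0,1], and suppose 0 < ∫₀¹ x^{k−1} q'(x)² dx < ∞. Then ∫₀¹ x^{k−2} q(x)² dx < ∞ and (k−1) ∫₀¹ x^{k−2} q(x)² dx ≤ (4/k) ∫₀¹ x^{k−1} q'(x)² dx. -/
open MeasureTheory Set

/-!
Let `s = k - 2` and `u x = (s + 2) / 4 * (1 + x)`. Integrating the square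
`x ^ (s + 1) * (q' + u * q) ^ 2 ≥ 0` over `[ε, 1]` and integrating the cross term by parts (the
boundary term at `1` vanishes because `q 1 = 0`, the one at `ε` has a favourable sign) bounds
`∫ x ^ (s + 1) * q' ^ 2` below by `∫ ((x ^ (s + 1) * u)' - x ^ (s + 1) * u ^ 2) * q ^ 2`. For this
`u` the weight is `(s + 1) * (s + 2) / 4 * x ^ s` plus a positive multiple of `4 - (1 + x) ^ 2`,
which is nonnegative on `[0, 1]`. Letting `ε → 0` gives the theorem.
-/

theorem intervalIntegrable_and_integral_le_of_forall_Ioo {μ : Measure ℝ} [NullSingletonClass μ]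
    {f : ℝ → ℝ} {a b C : ℝ} (hab : a < b) (hf_nonneg : ∀ x ∈ Ioc a b, 0 ≤ f x)
    (hf : ∀ ε ∈ Ioo a b, IntervalIntegrable f μ ε b)
    (hC : ∀ ε ∈ Ioo a b, ∫ x in ε..b, f x ∂μ ≤ C) :
    IntervalIntegrable f μ a b ∧ ∫ x in a..b, f x ∂μ ≤ C := by
  obtain ⟨ε, -, hε, hε_lim⟩ := exists_seq_strictAnti_tendsto' hab
  have hcover : AECover (μ.restrict (Ioc a b)) Filter.atTop fun i => Ioc (ε i) b :=
    aecover_Ioc_of_Ioc hε_lim tendsto_const_nhds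
  have hrestrict (i : ℕ) : (μ.restrict (Ioc a b)).restrict (Ioc (ε i) b) =
      μ.restrict (Ioc (ε i) b) :=
    Measure.restrict_restrict_of_subset (Ioc_subset_Ioc_left (hε i).1.le)
  have hint (i : ℕ) : IntegrableOn f (Ioc (ε i) b) (μ.restrict (Ioc a b)) := by
    rw [IntegrableOn, hrestrict]
    exact (hf _ (hε i)).1
  have hle (i : ℕ) : ∫ x in Ioc (ε i) b, f x ∂μ.restrict (Ioc a b) ≤ C := by
    rw [hrestrict, ← intervalIntegral.integral_of_le (hε i).2.le]
    exact hC _ (hε i)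
  have hf_int : IntegrableOn f (Ioc a b) μ :=
    hcover.integrable_of_integral_bounded_of_nonneg_ae C hint
      ((ae_restrict_iff' measurableSet_Ioc).2 (.of_forall hf_nonneg)) (.of_forall hle)
  rw [intervalIntegrable_iff_integrableOn_Ioc_of_le hab.le, intervalIntegral.integral_of_le hab.le]
  exact ⟨hf_int, le_of_tendsto' (hcover.integral_tendsto_of_countably_generated hf_int) hle⟩

theorem mul_sq_le_of_riccati {v w u W' : ℝ} (hw : 0 ≤ w) (hv : v ≤ W' - w * u ^ 2)
    (y p : ℝ) : v * y ^ 2 ≤ w * p ^ 2 + (W' * y ^ 2 + 2 * (w * u) * y * p) :=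
  calc v * y ^ 2 ≤ (W' - w * u ^ 2) * y ^ 2 := by gcongr
    _ ≤ (W' - w * u ^ 2) * y ^ 2 + w * (p + u * y) ^ 2 :=
      le_add_of_nonneg_right (mul_nonneg hw (sq_nonneg _))
    _ = w * p ^ 2 + (W' * y ^ 2 + 2 * (w * u) * y * p) := by ring

section Riccati

variable {a b : ℝ} {v w u W' Q p : ℝ → ℝ}

theorem intervalIntegrable_and_integral_deriv_mul_sq {W : ℝ → ℝ}
    (hW : AbsolutelyContinuousOnInterval W a b) (hQ : AbsolutelyContinuousOnInterval Q a b)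
    (hW' : ∀ᵐ x, x ∈ uIcc a b → HasDerivAt W (W' x) x)
    (hQ' : ∀ᵐ x, x ∈ uIcc a b → HasDerivAt Q (p x) x) :
    IntervalIntegrable (fun x => W' x * Q x ^ 2 + 2 * W x * Q x * p x) volume a b ∧
      ∫ x in a..b, (W' x * Q x ^ 2 + 2 * W x * Q x * p x) = W b * Q b ^ 2 - W a * Q a ^ 2 := by
  have hF : AbsolutelyContinuousOnInterval (W * (Q * Q)) a b := hW.mul (hQ.mul hQ)
  have hF' : ∀ᵐ x, x ∈ uIoc a b →
      deriv (W * (Q * Q)) x = W' x * Q x ^ 2 + 2 * W x * Q x * p x := by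
    filter_upwards [hW', hQ'] with x hWx hQx hx
    replace hx := uIoc_subset_uIcc hx
    rw [((hWx hx).mul ((hQx hx).mul (hQx hx))).deriv, Pi.mul_apply]
    ring
  refine ⟨hF.intervalIntegrable_deriv.congr_ae ((ae_restrict_iff' measurableSet_uIoc).2 hF'), ?_⟩
  rw [← intervalIntegral.integral_congr_ae hF', hF.integral_deriv_eq_sub]
  simp only [Pi.mul_apply, sq]

theorem integral_mul_sq_le_of_riccati (hab : a ≤ b) (hw : ∀ x ∈ Ioo a b, 0 ≤ w x)
    (hv : ∀ x ∈ Ioo a b, v x ≤ W' x - w x * u x ^ 2)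
    (hwu : AbsolutelyContinuousOnInterval (fun x => w x * u x) a b)
    (hwu' : ∀ᵐ x, x ∈ uIcc a b → HasDerivAt (fun x => w x * u x) (W' x) x)
    (hQ : AbsolutelyContinuousOnInterval Q a b)
    (hQ' : ∀ᵐ x, x ∈ uIcc a b → HasDerivAt Q (p x) x)
    (hvQ : IntervalIntegrable (fun x => v x * Q x ^ 2) volume a b)
    (hwp : IntervalIntegrable (fun x => w x * p x ^ 2) volume a b) :
    ∫ x in a..b, v x * Q x ^ 2 ≤
      (∫ x in a..b, w x * p x ^ 2) + (w b * u b * Q b ^ 2 - w a * u a * Q a ^ 2) := by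
  obtain ⟨hF, hF_eq⟩ := intervalIntegrable_and_integral_deriv_mul_sq hwu hQ hwu' hQ'
  rw [← hF_eq, ← intervalIntegral.integral_add hwp hF]
  exact intervalIntegral.integral_mono_on_of_le_Ioo hab hvQ (hwp.add hF) fun x hx =>
    mul_sq_le_of_riccati (hw x hx) (hv x hx) (Q x) (p x)

end Riccati

section RpowWeight

variable {s x ε : ℝ}

theorem hasDerivAt_rpow_mul_one_add (c : ℝ) (hx : 0 < x) :
    HasDerivAt (fun x : ℝ => x ^ (s + 1) * (c * (1 + x)))
      ((s + 1) * x ^ s * (c * (1 + x)) + x ^ (s + 1) * c) x := by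
  have hpow : HasDerivAt (fun x : ℝ => x ^ (s + 1)) ((s + 1) * x ^ s) x := by
    simpa only [add_sub_cancel_right] using Real.hasDerivAt_rpow_const (p := s + 1) (.inl hx.ne')
  have hlin : HasDerivAt (fun x : ℝ => c * (1 + x)) c x := by
    simpa only [mul_one] using ((hasDerivAt_id' x).const_add 1).const_mul c
  exact hpow.mul hlin

theorem rpow_mul_one_add_riccati (hx : 0 < x) (hx1 : x ≤ 1) :
    (s + 1) * (s + 2) / 4 * x ^ s ≤
      (s + 1) * x ^ s * ((s + 2) / 4 * (1 + x)) + x ^ (s + 1) * ((s + 2) / 4) -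
        x ^ (s + 1) * ((s + 2) / 4 * (1 + x)) ^ 2 := by
  have hgap : 0 ≤ x ^ s * x * ((s + 2) / 4) ^ 2 * (4 - (1 + x) ^ 2) :=
    mul_nonneg (by positivity) (by nlinarith)
  rw [Real.rpow_add_one hx.ne']
  linear_combination hgap

theorem intervalIntegrable_rpow_mul_sq {a b : ℝ} {Q : ℝ → ℝ} (h0 : 0 ∉ uIcc a b)
    (hQ : ContinuousOn Q (uIcc a b)) :
    IntervalIntegrable (fun x => x ^ s * Q x ^ 2) volume a b :=
  ((continuousOn_id.rpow_const fun _ hx => .inl (ne_of_mem_of_not_mem hx h0)).mul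
    (hQ.pow 2)).intervalIntegrable

theorem integral_rpow_mul_sq_le {Q p : ℝ → ℝ} (hs : -2 ≤ s) (hε : 0 < ε) (hε1 : ε ≤ 1)
    (hQ : AbsolutelyContinuousOnInterval Q ε 1)
    (hQ' : ∀ᵐ x, x ∈ uIcc ε 1 → HasDerivAt Q (p x) x) (hQ1 : Q 1 = 0)
    (hp : IntervalIntegrable (fun x => x ^ (s + 1) * p x ^ 2) volume ε 1) :
    (s + 1) * (s + 2) / 4 * ∫ x in ε..1, x ^ s * Q x ^ 2 ≤ ∫ x in ε..1, x ^ (s + 1) * p x ^ 2 := by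
  have hpos : ∀ x ∈ uIcc ε 1, 0 < x := fun x hx => hε.trans_le (uIcc_of_le hε1 ▸ hx).1
  have hwu : AbsolutelyContinuousOnInterval
      (fun x => x ^ (s + 1) * ((s + 2) / 4 * (1 + x))) ε 1 := by
    refine ContDiffOn.absolutelyContinuousOnInterval fun x hx => ContDiffAt.contDiffWithinAt ?_
    exact (Real.contDiffAt_rpow_const_of_ne (hpos x hx).ne').mul (by fun_prop)
  have hvQ : IntervalIntegrable (fun x => (s + 1) * (s + 2) / 4 * x ^ s * Q x ^ 2) volume ε 1 := by
    simpa only [mul_assoc _ (_ ^ s)] using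
      (intervalIntegrable_rpow_mul_sq (fun h => (hpos 0 h).false) hQ.continuousOn).const_mul _
  have hbound := integral_mul_sq_le_of_riccati hε1
    (fun x hx => Real.rpow_nonneg (hε.trans hx.1).le _)
    (fun x hx => rpow_mul_one_add_riccati (hε.trans hx.1) hx.2.le) hwu
    (.of_forall fun x hx => hasDerivAt_rpow_mul_one_add _ (hpos x hx)) hQ hQ' hvQ hp
  have hboundary : 0 ≤ ε ^ (s + 1) * ((s + 2) / 4 * (1 + ε)) * Q ε ^ 2 := by
    have : 0 ≤ s + 2 := by linarith
    positivity
  simp only [mul_assoc _ (_ ^ s), intervalIntegral.integral_const_mul, hQ1] at hbound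
  linarith

end RpowWeight

theorem intervalIntegrable_rpow_mul_sq_primitive_and_integral_le {s : ℝ} {p : ℝ → ℝ} (hs : -1 < s)
    (hp : ∀ x ∈ Ioc (0 : ℝ) 1, IntervalIntegrable p volume x 1)
    (hp_sq : IntervalIntegrable (fun x => x ^ (s + 1) * p x ^ 2) volume 0 1) :
    IntervalIntegrable (fun x => x ^ s * (∫ t in 1..x, p t) ^ 2) volume 0 1 ∧
      ∫ x in 0..1, x ^ s * (∫ t in 1..x, p t) ^ 2 ≤
        (∫ x in 0..1, x ^ (s + 1) * p x ^ 2) / ((s + 1) * (s + 2) / 4) := by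
  have hconst : 0 < (s + 1) * (s + 2) / 4 := by nlinarith
  have hnonneg (r : ℝ) (g : ℝ → ℝ) : ∀ x ∈ Ioc (0 : ℝ) 1, 0 ≤ x ^ r * g x ^ 2 :=
    fun x hx => mul_nonneg (Real.rpow_nonneg hx.1.le r) (sq_nonneg _)
  have hQ : ∀ ε ∈ Ioo (0 : ℝ) 1, AbsolutelyContinuousOnInterval (fun x => ∫ t in 1..x, p t) ε 1 :=
    fun ε hε => (hp ε (Ioo_subset_Ioc_self hε)).absolutelyContinuousOnInterval_intervalIntegral
      right_mem_uIcc
  refine intervalIntegrable_and_integral_le_of_forall_Ioo zero_lt_one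
    (hnonneg s fun x => ∫ t in 1..x, p t)
    (fun ε hε => intervalIntegrable_rpow_mul_sq (notMem_uIcc_of_lt hε.1 one_pos)
      (hQ ε hε).continuousOn) fun ε hε => ?_
  have hQ' : ∀ᵐ x, x ∈ uIcc ε 1 → HasDerivAt (fun x => ∫ t in 1..x, p t) (p x) x :=
    (hp ε (Ioo_subset_Ioc_self hε)).ae_hasDerivAt_integral.mono fun x hderiv hx =>
      hderiv hx 1 right_mem_uIcc
  have hp_sq_ε : IntervalIntegrable (fun x => x ^ (s + 1) * p x ^ 2) volume ε 1 :=
    hp_sq.mono_set (uIcc_subset_uIcc_right (Icc_subset_uIcc (Ioo_subset_Icc_self hε)))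
  rw [le_div_iff₀' hconst]
  calc (s + 1) * (s + 2) / 4 * ∫ x in ε..1, x ^ s * (∫ t in 1..x, p t) ^ 2
      ≤ ∫ x in ε..1, x ^ (s + 1) * p x ^ 2 :=
        integral_rpow_mul_sq_le (by linarith) hε.1 hε.2.le (hQ ε hε) hQ'
          intervalIntegral.integral_same hp_sq_ε
    _ ≤ ∫ x in 0..1, x ^ (s + 1) * p x ^ 2 :=
        intervalIntegral.integral_mono_interval hε.1.le hε.2.le le_rfl
          ((ae_restrict_iff' measurableSet_Ioc).2 (.of_forall (hnonneg (s + 1) p))) hp_sq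

theorem gpy_ratio_le_four_div_k_general (k : ℝ) (hk : 1 < k) (q q' : ℝ → ℝ)
    (hloc : ∀ x ∈ Set.Ioc (0 : ℝ) 1, IntervalIntegrable q' volume x 1)
    (hq : ∀ x ∈ Set.Ioc (0 : ℝ) 1, q x = -∫ t in x..1, q' t)
    (hfin : IntegrableOn (fun x => x ^ (k - 1) * (q' x) ^ 2) (Set.Ioc 0 1) volume) :
    IntegrableOn (fun x => x ^ (k - 2) * (q x) ^ 2) (Set.Ioc 0 1) volume ∧
      (k - 1) * ∫ x in Set.Ioc (0 : ℝ) 1, x ^ (k - 2) * (q x) ^ 2 ≤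
        (4 / k) * ∫ x in Set.Ioc (0 : ℝ) 1, x ^ (k - 1) * (q' x) ^ 2 := by
  have hq_primitive : EqOn (fun x => x ^ (k - 2) * (∫ t in 1..x, q' t) ^ 2)
      (fun x => x ^ (k - 2) * q x ^ 2) (Ioc 0 1) := fun x hx => by
    simp only [hq x hx, intervalIntegral.integral_symm 1 x, neg_neg]
  have hs : k - 2 + 1 = k - 1 := by ring
  have hfin' := (intervalIntegrable_iff_integrableOn_Ioc_of_le zero_le_one).2 hfin
  obtain ⟨hint, hle⟩ := intervalIntegrable_rpow_mul_sq_primitive_and_integral_le (s := k - 2)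
    (by linarith) hloc (by rwa [hs])
  rw [intervalIntegrable_iff_integrableOn_Ioc_of_le zero_le_one] at hint
  simp only [intervalIntegral.integral_of_le zero_le_one, hs, sub_add_cancel,
    setIntegral_congr_fun measurableSet_Ioc hq_primitive] at hle
  refine ⟨hint.congr_fun hq_primitive measurableSet_Ioc, ?_⟩
  have hk' : 0 < k - 1 := sub_pos.2 hk
  calc (k - 1) * ∫ x in Ioc (0 : ℝ) 1, x ^ (k - 2) * q x ^ 2
      ≤ (k - 1) * ((∫ x in Ioc (0 : ℝ) 1, x ^ (k - 1) * q' x ^ 2) / ((k - 1) * k / 4)) := by gcongr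
    _ = 4 / k * ∫ x in Ioc (0 : ℝ) 1, x ^ (k - 1) * q' x ^ 2 := by field_simp

/-- For `k ≥ 2`, any admissible `q` (absolutely continuous on compact
subintervals of `(0,1]`, given as `q x = -∫_x^1 q'`, with finite positive weighted energy
`∫₀¹ x^(k-1) q'(x)² dx`) satisfies `∫₀¹ x^(k-2) q² < ∞` and
`(k-1) ∫₀¹ x^(k-2) q² ≤ (4/k) ∫₀¹ x^(k-1) q'²`. -/
theorem gpy_ratio_le_four_div_k (k : ℕ) (hk : 2 ≤ k) (q q' : ℝ → ℝ)
    (hloc : ∀ x ∈ Set.Ioc (0:ℝ) 1, IntervalIntegrable q' volume x 1)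
    (hq : ∀ x ∈ Set.Ioc (0:ℝ) 1, q x = -∫ t in x..1, q' t)
    (hfin : IntegrableOn (fun x => x ^ (k - 1) * (q' x) ^ 2) (Set.Ioc 0 1) volume)
    (hpos : 0 < ∫ x in Set.Ioc (0:ℝ) 1, x ^ (k - 1) * (q' x) ^ 2) :
    IntegrableOn (fun x => x ^ (k - 2) * (q x) ^ 2) (Set.Ioc 0 1) volume ∧
      ((k : ℝ) - 1) * ∫ x in Set.Ioc (0:ℝ) 1, x ^ (k - 2) * (q x) ^ 2 ≤
        (4 / (k : ℝ)) * ∫ x in Set.Ioc (0:ℝ) 1, x ^ (k - 1) * (q' x) ^ 2 := by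
  have hk1 : ((k - 1 : ℕ) : ℝ) = k - 1 := Nat.cast_pred (by lia)
  have hk2 : ((k - 2 : ℕ) : ℝ) = k - 2 := Nat.cast_sub hk
  simp only [← Real.rpow_natCast _ (k - 1), ← Real.rpow_natCast _ (k - 2), hk1, hk2] at hfin ⊢
  exact gpy_ratio_le_four_div_k_general k (by exact_mod_cast hk) q q' hloc hq hfin
end

section
/- Let k ≥ 3 be an integer, n := k−1, m := k−2, and let α := α_{m,1} denote the smallest positive zero of the Bessel function J_m. Define S(k) as the supremum of (k−1)(∫₀¹ x^{k−2} q(x)² dx)/(∫₀¹ x^{k−1} q'(x)² dx) over all q : (0,1] → ℝ that are absolutely continuous on compact subintervals of (0,1] with q(x) = −∫_x^1 q'(t) dt and 0 < ∫₀¹ x^{k−1} q'(x)² dx < ∞. Then S(k) = 4(k−1)/α². Moreover the supremum is attained, and the maximizers are exactly the nonzero constant multiples of q₁(x) := x^{−m/2} J_m(α √x); in particular q₁ is strictly positive on (0,1). -/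
open MeasureTheory Set

/-- The Bessel function of the first kind of integer order `m`, defined by its
everywhere-convergent power series. -/
noncomputable def besselJ (m : ℕ) (x : ℝ) : ℝ :=
  ∑' j : ℕ, ((-1) ^ j / ((Nat.factorial j : ℝ) * (Nat.factorial (m + j) : ℝ))) *
    (x / 2) ^ (m + 2 * j)

/-- A pair `(q, q')` is admissible for the GPY extremal problem: `q` is the indefinite
integral `q x = -∫_x^1 q'` (hence absolutely continuous on compact subintervals of
`(0,1]`), and `0 < ∫₀¹ x^(k-1) q'(x)² dx < ∞`. -/
def GPYAdmissible (k : ℕ) (q q' : ℝ → ℝ) : Prop :=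
  (∀ x ∈ Set.Ioc (0:ℝ) 1, IntervalIntegrable q' volume x 1) ∧
  (∀ x ∈ Set.Ioc (0:ℝ) 1, q x = -∫ t in x..1, q' t) ∧
  IntegrableOn (fun x => x ^ (k - 1) * (q' x) ^ 2) (Set.Ioc 0 1) volume ∧
  0 < ∫ x in Set.Ioc (0:ℝ) 1, x ^ (k - 1) * (q' x) ^ 2

/-- The Goldston–Pintz–Yıldırım ratio of an admissible pair. -/
noncomputable def GPYRatio (k : ℕ) (q q' : ℝ → ℝ) : ℝ :=
  ((k : ℝ) - 1) * (∫ x in Set.Ioc (0:ℝ) 1, x ^ (k - 2) * (q x) ^ 2) /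
    ∫ x in Set.Ioc (0:ℝ) 1, x ^ (k - 1) * (q' x) ^ 2

/-!
Write `m = k - 2` and `λ = α² / 4`. The function `q₁` is a multiple of `u(x) = C_m(-λx)`, where
`C_m` is the entire function with `J_m(x) = (x/2)^m C_m(-x²/4)`. It solves the Euler–Lagrange
equation `(x^(m+1) u')' = -λ x^m u`, is positive on `[0, 1)` because `α` is the first zero of `J_m`,
and vanishes at `1`. Picone's identity
`(x^(m+1) (u'/u) q²)' = x^(m+1) q'² - λ x^m q² - x^(m+1) (q' - q u'/u)²`
integrates to `λ ∫ x^m q² ≤ ∫ x^(m+1) q'²` once the boundary terms vanish, with equality exactly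
when `(q/u)' = 0` almost everywhere, that is `q = c u`. By the Cauchy–Schwarz inequality
`x^m q(x)² ≤ (-log x) ∫_x^1 t^(m+1) q'(t)² dt`, which controls the boundary terms: at `0` because
`x log x → 0`, and at `1` because `u` has a simple zero there while the integral tends to `0`.
-/

open Filter Topology

section AbsolutelyContinuous

variable {f g D G q : ℝ → ℝ} {a b c d A B : ℝ} {s : Set ℝ}

/-- Absolute continuity on every compact interval contained in `s`. -/
def LocallyAbsolutelyContinuousOn (f : ℝ → ℝ) (s : Set ℝ) : Prop :=
  ∀ ⦃c d : ℝ⦄, uIcc c d ⊆ s → AbsolutelyContinuousOnInterval f c d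

lemma contDiffOn_one_of_hasDerivAt (hs : IsOpen s) (hf : ∀ x ∈ s, HasDerivAt f (g x) x)
    (hg : ContinuousOn g s) : ContDiffOn ℝ 1 f s := by
  rw [contDiffOn_one_iff_derivWithin hs.uniqueDiffOn]
  refine ⟨fun x hx => (hf x hx).differentiableAt.differentiableWithinAt, hg.congr fun x hx => ?_⟩
  rw [derivWithin_of_isOpen hs hx, (hf x hx).deriv]

lemma absolutelyContinuousOnInterval_congr (hf : AbsolutelyContinuousOnInterval f a b)
    (hfg : EqOn f g (uIcc a b)) : AbsolutelyContinuousOnInterval g a b := by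
  refine Tendsto.congr' ?_ hf
  filter_upwards [mem_inf_of_right (mem_principal_self _)] with E hE
  refine Finset.sum_congr rfl fun i hi => ?_
  obtain ⟨h₁, h₂⟩ := hE.1 i hi
  rw [hfg h₁, hfg h₂]

namespace LocallyAbsolutelyContinuousOn

lemma mono {t : Set ℝ} (hf : LocallyAbsolutelyContinuousOn f t) (hst : s ⊆ t) :
    LocallyAbsolutelyContinuousOn f s :=
  fun _ _ h => hf (h.trans hst)

lemma mul (hf : LocallyAbsolutelyContinuousOn f s) (hg : LocallyAbsolutelyContinuousOn g s) :
    LocallyAbsolutelyContinuousOn (fun x => f x * g x) s :=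
  fun _ _ h => (hf h).fun_mul (hg h)

lemma of_contDiffOn (hf : ContDiffOn ℝ 1 f s) : LocallyAbsolutelyContinuousOn f s :=
  fun _ _ h => (hf.mono h).absolutelyContinuousOnInterval

lemma continuousOn (hf : LocallyAbsolutelyContinuousOn f (Ioc a b)) : ContinuousOn f (Ioc a b) := by
  intro x hx
  obtain ⟨c, hac, hcx⟩ := exists_between hx.1
  have hcb : c ≤ b := hcx.le.trans hx.2
  have hcont : ContinuousOn f (Icc c b) := by
    rw [← uIcc_of_le hcb]
    refine (hf ?_).continuousOn
    rw [uIcc_of_le hcb]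
    exact Icc_subset_Ioc hac le_rfl
  refine (hcont x ⟨hcx.le, hx.2⟩).mono_of_mem_nhdsWithin ?_
  filter_upwards [self_mem_nhdsWithin, mem_nhdsWithin_of_mem_nhds (Ioi_mem_nhds hcx)] with y hy hcy
  exact ⟨hcy.le, hy.2⟩

lemma intervalIntegrable (hG : LocallyAbsolutelyContinuousOn G (Ioo a b))
    (hg : ∀ᵐ x, x ∈ Ioo a b → HasDerivAt G (g x) x) (hc : c ∈ Ioo a b) (hd : d ∈ Ioo a b) :
    IntervalIntegrable g volume c d := by
  have hcd : uIcc c d ⊆ Ioo a b := ordConnected_Ioo.uIcc_subset hc hd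
  refine (hG hcd).intervalIntegrable_deriv.congr_ae ?_
  rw [EventuallyEq, ae_restrict_iff' measurableSet_uIoc]
  filter_upwards [hg] with x hx hxcd
  exact (hx (hcd (uIoc_subset_uIcc hxcd))).deriv

lemma integral_eq_sub (hG : LocallyAbsolutelyContinuousOn G (Ioo a b))
    (hg : ∀ᵐ x, x ∈ Ioo a b → HasDerivAt G (g x) x) (hc : c ∈ Ioo a b) (hd : d ∈ Ioo a b) :
    ∫ x in c..d, g x = G d - G c := by
  have hcd : uIcc c d ⊆ Ioo a b := ordConnected_Ioo.uIcc_subset hc hd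
  rw [← (hG hcd).integral_deriv_eq_sub]
  apply intervalIntegral.integral_congr_ae
  filter_upwards [hg] with x hx hxcd
  exact (hx (hcd (uIoc_subset_uIcc hxcd))).deriv.symm

lemma exists_eq_const (hG : LocallyAbsolutelyContinuousOn G (Ioo a b))
    (hG' : ∀ᵐ x, x ∈ Ioo a b → HasDerivAt G 0 x) : ∃ C, ∀ x ∈ Ioo a b, G x = C := by
  rcases (Ioo a b).eq_empty_or_nonempty with hempty | ⟨y, hy⟩
  · exact ⟨0, by simp [hempty]⟩
  refine ⟨G y, fun x hx => ?_⟩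
  have h := hG.integral_eq_sub hG' hy hx
  rw [intervalIntegral.integral_zero] at h
  linarith

/-- An improper fundamental theorem of calculus: the integrability of `D` is part of the
conclusion because `D` has a sign. -/
lemma integrableOn_and_integral_eq (hab : a < b) (hG : LocallyAbsolutelyContinuousOn G (Ioo a b))
    (hG' : ∀ᵐ x, x ∈ Ioo a b → HasDerivAt G (g x - D x) x) (hg : IntegrableOn g (Ioo a b))
    (hD : ∀ x ∈ Ioo a b, 0 ≤ D x) (hA : Tendsto G (𝓝[>] a) (𝓝 A))
    (hB : Tendsto G (𝓝[<] b) (𝓝 B)) :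
    IntegrableOn D (Ioo a b) ∧ ∫ x in Ioo a b, D x = (∫ x in Ioo a b, g x) - (B - A) := by
  obtain ⟨y, hay, hyb⟩ := exists_between hab
  obtain ⟨c, -, hc, hca⟩ := exists_seq_strictAnti_tendsto' hay
  obtain ⟨d, -, hd, hdb⟩ := exists_seq_strictMono_tendsto' hyb
  have hc' (n : ℕ) : c n ∈ Ioo a b := ⟨(hc n).1, (hc n).2.trans hyb⟩
  have hd' (n : ℕ) : d n ∈ Ioo a b := ⟨hay.trans (hd n).1, (hd n).2⟩
  have hcd (n : ℕ) : c n ≤ d n := ((hc n).2.trans (hd n).1).le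
  have hsub (n : ℕ) : Ioc (c n) (d n) ⊆ Ioo a b := Ioc_subset_Ioo (hc' n).1.le (hd' n).2
  have hcover : AECover (volume.restrict (Ioo a b)) atTop fun n => Ioc (c n) (d n) :=
    aecover_Ioo_of_Ioc hca hdb
  have hgint (n : ℕ) : IntervalIntegrable g volume (c n) (d n) :=
    (intervalIntegrable_iff_integrableOn_Ioc_of_le (hcd n)).2 (hg.mono_set (hsub n))
  have hDint (n : ℕ) : IntervalIntegrable D volume (c n) (d n) := by
    simpa using (hgint n).sub (hG.intervalIntegrable hG' (hc' n) (hd' n))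
  have hrestrict (n : ℕ) :
      (volume.restrict (Ioo a b)).restrict (Ioc (c n) (d n)) = volume.restrict (Ioc (c n) (d n)) :=
    Measure.restrict_restrict_of_subset (hsub n)
  have hpartial (n : ℕ) : ∫ x in Ioc (c n) (d n), D x ∂volume.restrict (Ioo a b) =
      (∫ x in Ioc (c n) (d n), g x ∂volume.restrict (Ioo a b)) - (G (d n) - G (c n)) := by
    rw [hrestrict, ← intervalIntegral.integral_of_le (hcd n),
      ← intervalIntegral.integral_of_le (hcd n), ← hG.integral_eq_sub hG' (hc' n) (hd' n),
      intervalIntegral.integral_sub (hgint n) (hDint n)]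
    ring
  have hGa : Tendsto (fun n => G (c n)) atTop (𝓝 A) :=
    hA.comp (tendsto_nhdsWithin_iff.2 ⟨hca, .of_forall fun n => (hc n).1⟩)
  have hGb : Tendsto (fun n => G (d n)) atTop (𝓝 B) :=
    hB.comp (tendsto_nhdsWithin_iff.2 ⟨hdb, .of_forall fun n => (hd n).2⟩)
  have hlim := ((hcover.integral_tendsto_of_countably_generated hg).sub (hGb.sub hGa)).congr
    fun n => (hpartial n).symm
  have hDnonneg : ∀ᵐ x ∂volume.restrict (Ioo a b), 0 ≤ D x :=
    ae_restrict_of_forall_mem measurableSet_Ioo hD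
  have hDon : IntegrableOn D (Ioo a b) :=
    hcover.integrable_of_integral_tendsto_of_nonneg_ae _ (fun n => by
      rw [IntegrableOn, hrestrict]
      exact (hDint n).1) hDnonneg hlim
  exact ⟨hDon, hcover.integral_eq_of_tendsto _ hDon hlim⟩

lemma of_eq_integral (hf : ∀ x ∈ Ioc a b, IntervalIntegrable f volume x b)
    (hq : ∀ x ∈ Ioc a b, q x = -∫ t in x..b, f t) :
    LocallyAbsolutelyContinuousOn q (Ioc a b) := by
  intro c d hcd
  have hmin : min c d ∈ Ioc a b := hcd (by simp [uIcc])
  have hsub : uIcc c d ⊆ uIcc (min c d) b := by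
    rw [uIcc_of_le hmin.2]
    exact fun x hx => ⟨hx.1, (hcd hx).2⟩
  refine absolutelyContinuousOnInterval_congr (((hf _ hmin
    ).absolutelyContinuousOnInterval_intervalIntegral right_mem_uIcc).mono hsub) fun x hx => ?_
  simp only [hq x (hcd hx), intervalIntegral.integral_symm x b]

end LocallyAbsolutelyContinuousOn

lemma ae_hasDerivAt_of_eq_integral (hf : ∀ x ∈ Ioc a b, IntervalIntegrable f volume x b)
    (hq : ∀ x ∈ Ioc a b, q x = -∫ t in x..b, f t) :
    ∀ᵐ x, x ∈ Ioo a b → HasDerivAt q (f x) x := by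
  rcases le_or_gt b a with hba | hab
  · simp [Ioo_eq_empty_of_le hba]
  obtain ⟨c, -, hc, hca⟩ := exists_seq_strictAnti_tendsto' hab
  have hderiv := ae_all_iff.2 fun n : ℕ => (hf (c n) ⟨(hc n).1, (hc n).2.le⟩).ae_hasDerivAt_integral
  filter_upwards [hderiv] with x hx hxab
  obtain ⟨n, hn⟩ := (hca.eventually_lt_const hxab.1).exists
  have hxn : x ∈ uIcc (c n) b := by
    rw [uIcc_of_le (hc n).2.le]
    exact ⟨hn.le, hxab.2.le⟩
  refine (hx n hxn b right_mem_uIcc).congr_of_eventuallyEq ?_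
  filter_upwards [Ioo_mem_nhds hxab.1 hxab.2] with y hy
  rw [hq y ⟨hy.1, hy.2.le⟩, intervalIntegral.integral_symm y b]

end AbsolutelyContinuous

section Picone

variable {p w u v q f : ℝ → ℝ} {lam a b x : ℝ}

/-- A positive solution `u` on `(a, b)`, with derivative `v`, of the Sturm–Liouville equation
`(p u')' = -λ w u`, where the weights `p` and `w` are continuous and `p` is positive. -/
structure IsPositiveSturmLiouvilleSolution (p w : ℝ → ℝ) (lam a b : ℝ) (u v : ℝ → ℝ) :
    Prop where
  continuousOn_p : ContinuousOn p (Ioo a b)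
  continuousOn_w : ContinuousOn w (Ioo a b)
  p_pos : ∀ x ∈ Ioo a b, 0 < p x
  pos : ∀ x ∈ Ioo a b, 0 < u x
  hasDerivAt : ∀ x ∈ Ioo a b, HasDerivAt u (v x) x
  hasDerivAt_flux : ∀ x ∈ Ioo a b, HasDerivAt (fun x => p x * v x) (-(lam * w x * u x)) x

/-- The term `p (u'/u) q²` whose derivative appears in Picone's identity. -/
noncomputable def piconeBoundary (p u v q : ℝ → ℝ) (x : ℝ) : ℝ :=
  p x * v x / u x * q x ^ 2

/-- The nonnegative remainder `p (q' - q u'/u)²` in Picone's identity, with `f` standing for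
`q'`. -/
noncomputable def piconeDefect (p u v q f : ℝ → ℝ) (x : ℝ) : ℝ :=
  p x * (f x - q x * v x / u x) ^ 2

/-- The functions `q` on `(a, b)`, with almost everywhere derivative `f`, to which the integrated
form of Picone's identity applies: both quadratic integrals are finite and the boundary terms
vanish. -/
structure IsPiconeTestFunction (p w u v : ℝ → ℝ) (a b : ℝ) (q f : ℝ → ℝ) : Prop where
  locallyAbsolutelyContinuousOn : LocallyAbsolutelyContinuousOn q (Ioo a b)
  ae_hasDerivAt : ∀ᵐ x, x ∈ Ioo a b → HasDerivAt q (f x) x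
  integrableOn_energy : IntegrableOn (fun x => p x * f x ^ 2) (Ioo a b)
  integrableOn_mass : IntegrableOn (fun x => w x * q x ^ 2) (Ioo a b)
  tendsto_left : Tendsto (piconeBoundary p u v q) (𝓝[>] a) (𝓝 0)
  tendsto_right : Tendsto (piconeBoundary p u v q) (𝓝[<] b) (𝓝 0)

namespace IsPositiveSturmLiouvilleSolution

lemma contDiffOn (h : IsPositiveSturmLiouvilleSolution p w lam a b u v) :
    ContDiffOn ℝ 1 u (Ioo a b) := by
  have hflux : ContinuousOn (fun x => p x * v x) (Ioo a b) := fun x hx =>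
    (h.hasDerivAt_flux x hx).continuousAt.continuousWithinAt
  refine contDiffOn_one_of_hasDerivAt isOpen_Ioo h.hasDerivAt
    ((hflux.div h.continuousOn_p fun x hx => (h.p_pos x hx).ne').congr fun x hx =>
      (mul_div_cancel_left₀ _ (h.p_pos x hx).ne').symm)

lemma contDiffOn_flux (h : IsPositiveSturmLiouvilleSolution p w lam a b u v) :
    ContDiffOn ℝ 1 (fun x => p x * v x) (Ioo a b) :=
  contDiffOn_one_of_hasDerivAt isOpen_Ioo h.hasDerivAt_flux
    ((continuousOn_const.mul h.continuousOn_w).mul h.contDiffOn.continuousOn).neg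

lemma piconeDefect_nonneg (h : IsPositiveSturmLiouvilleSolution p w lam a b u v)
    (hx : x ∈ Ioo a b) : 0 ≤ piconeDefect p u v q f x :=
  mul_nonneg (h.p_pos x hx).le (sq_nonneg _)

lemma hasDerivAt_piconeBoundary (h : IsPositiveSturmLiouvilleSolution p w lam a b u v)
    (hx : x ∈ Ioo a b) (hq : HasDerivAt q (f x) x) :
    HasDerivAt (piconeBoundary p u v q)
      (p x * f x ^ 2 - lam * (w x * q x ^ 2) - piconeDefect p u v q f x) x := by
  have hux : u x ≠ 0 := (h.pos x hx).ne'
  refine (((h.hasDerivAt_flux x hx).fun_div (h.hasDerivAt x hx) hux).fun_mul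
    (hq.fun_pow 2)).congr_deriv ?_
  unfold piconeDefect
  field_simp
  push_cast
  ring

lemma locallyAbsolutelyContinuousOn_piconeBoundary
    (h : IsPositiveSturmLiouvilleSolution p w lam a b u v)
    (hq : LocallyAbsolutelyContinuousOn q (Ioo a b)) :
    LocallyAbsolutelyContinuousOn (piconeBoundary p u v q) (Ioo a b) := by
  have hratio : ContDiffOn ℝ 1 (fun x => p x * v x / u x) (Ioo a b) :=
    h.contDiffOn_flux.div h.contDiffOn fun x hx => (h.pos x hx).ne'
  have hmul := (LocallyAbsolutelyContinuousOn.of_contDiffOn hratio).mul (hq.mul hq)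
  simp only [← pow_two] at hmul
  exact hmul

lemma integrableOn_and_integral_piconeDefect
    (h : IsPositiveSturmLiouvilleSolution p w lam a b u v) (hab : a < b)
    (hq : IsPiconeTestFunction p w u v a b q f) :
    IntegrableOn (piconeDefect p u v q f) (Ioo a b) ∧
      ∫ x in Ioo a b, piconeDefect p u v q f x =
        (∫ x in Ioo a b, p x * f x ^ 2) - lam * ∫ x in Ioo a b, w x * q x ^ 2 := by
  have hmass := hq.integrableOn_mass.const_mul lam
  have hderiv : ∀ᵐ x, x ∈ Ioo a b → HasDerivAt (piconeBoundary p u v q)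
      (p x * f x ^ 2 - lam * (w x * q x ^ 2) - piconeDefect p u v q f x) x := by
    filter_upwards [hq.ae_hasDerivAt] with x hqx hx
    exact h.hasDerivAt_piconeBoundary hx (hqx hx)
  obtain ⟨hint, heq⟩ := (h.locallyAbsolutelyContinuousOn_piconeBoundary
    hq.locallyAbsolutelyContinuousOn).integrableOn_and_integral_eq hab hderiv
    (hq.integrableOn_energy.sub hmass) (fun x => h.piconeDefect_nonneg) hq.tendsto_left
    hq.tendsto_right
  refine ⟨hint, ?_⟩
  rw [heq, integral_sub hq.integrableOn_energy hmass, integral_const_mul, sub_self, sub_zero]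

theorem mul_integral_le (h : IsPositiveSturmLiouvilleSolution p w lam a b u v) (hab : a < b)
    (hq : IsPiconeTestFunction p w u v a b q f) :
    lam * ∫ x in Ioo a b, w x * q x ^ 2 ≤ ∫ x in Ioo a b, p x * f x ^ 2 := by
  rw [← sub_nonneg, ← (h.integrableOn_and_integral_piconeDefect hab hq).2]
  exact setIntegral_nonneg measurableSet_Ioo fun x => h.piconeDefect_nonneg

lemma piconeDefect_eq_zero_iff (h : IsPositiveSturmLiouvilleSolution p w lam a b u v)
    (hx : x ∈ Ioo a b) : piconeDefect p u v q f x = 0 ↔ f x = q x * v x / u x := by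
  simp only [piconeDefect, mul_eq_zero, (h.p_pos x hx).ne', false_or, sq_eq_zero_iff, sub_eq_zero]

/-- The condition says that `q / u` has derivative zero almost everywhere. -/
lemma exists_eq_const_mul_iff (h : IsPositiveSturmLiouvilleSolution p w lam a b u v)
    (hq : LocallyAbsolutelyContinuousOn q (Ioo a b))
    (hq' : ∀ᵐ x, x ∈ Ioo a b → HasDerivAt q (f x) x) :
    (∃ c, ∀ x ∈ Ioo a b, q x = c * u x) ↔ ∀ᵐ x, x ∈ Ioo a b → f x = q x * v x / u x := by
  constructor
  · rintro ⟨c, hc⟩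
    filter_upwards [hq'] with x hqx hx
    have hcu : HasDerivAt q (c * v x) x := by
      refine ((h.hasDerivAt x hx).const_mul c).congr_of_eventuallyEq ?_
      filter_upwards [Ioo_mem_nhds hx.1 hx.2] with y hy using hc y hy
    rw [(hqx hx).unique hcu, hc x hx]
    field_simp [(h.pos x hx).ne']
  · intro hf
    have hinv : ContDiffOn ℝ 1 (fun x => (u x)⁻¹) (Ioo a b) :=
      h.contDiffOn.inv fun x hx => (h.pos x hx).ne'
    obtain ⟨c, hc⟩ := (hq.mul (.of_contDiffOn hinv)).exists_eq_const (by
      filter_upwards [hf, hq'] with x hfx hqx hx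
      have hux : u x ≠ 0 := (h.pos x hx).ne'
      refine ((hqx hx).fun_mul ((h.hasDerivAt x hx).fun_inv hux)).congr_deriv ?_
      rw [hfx hx]
      field_simp
      ring)
    exact ⟨c, fun x hx => (mul_inv_eq_iff_eq_mul₀ (h.pos x hx).ne').1 (hc x hx)⟩

theorem integral_eq_mul_iff (h : IsPositiveSturmLiouvilleSolution p w lam a b u v) (hab : a < b)
    (hq : IsPiconeTestFunction p w u v a b q f) :
    ∫ x in Ioo a b, p x * f x ^ 2 = lam * ∫ x in Ioo a b, w x * q x ^ 2 ↔
      ∃ c, ∀ x ∈ Ioo a b, q x = c * u x := by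
  obtain ⟨hint, heq⟩ := h.integrableOn_and_integral_piconeDefect hab hq
  have hnonneg : 0 ≤ᵐ[volume.restrict (Ioo a b)] piconeDefect p u v q f :=
    ae_restrict_of_forall_mem measurableSet_Ioo fun x => h.piconeDefect_nonneg
  rw [h.exists_eq_const_mul_iff hq.locallyAbsolutelyContinuousOn hq.ae_hasDerivAt, ← sub_eq_zero,
    ← heq, setIntegral_eq_zero_iff_of_nonneg_ae hnonneg hint, EventuallyEq,
    ae_restrict_iff' measurableSet_Ioo]
  exact eventually_congr (.of_forall fun x => forall_congr' h.piconeDefect_eq_zero_iff)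

end IsPositiveSturmLiouvilleSolution

end Picone

section Energy

lemma sq_integral_le_integral_mul_integral_inv {Ω : Type*} [MeasurableSpace Ω] {μ : Measure Ω}
    {p f : Ω → ℝ} (hp : ∀ᵐ x ∂μ, 0 < p x) (hf : Integrable f μ)
    (hpf : Integrable (fun x => p x * f x ^ 2) μ) (hinv : Integrable (fun x => (p x)⁻¹) μ) :
    (∫ x, f x ∂μ) ^ 2 ≤ (∫ x, p x * f x ^ 2 ∂μ) * ∫ x, (p x)⁻¹ ∂μ := by
  have hquadratic (s : ℝ) : 0 ≤ (∫ x, p x * f x ^ 2 ∂μ) * (s * s) + (2 * ∫ x, f x ∂μ) * s +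
      ∫ x, (p x)⁻¹ ∂μ := by
    calc 0 ≤ ∫ x, ((s * s) * (p x * f x ^ 2) + (2 * s) * f x + (p x)⁻¹) ∂μ := by
          refine integral_nonneg_of_ae ?_
          filter_upwards [hp] with x hpx
          have hsq : (s * s) * (p x * f x ^ 2) + (2 * s) * f x + (p x)⁻¹ =
              (p x)⁻¹ * (s * p x * f x + 1) ^ 2 := by
            field_simp
            ring
          rw [hsq, Pi.zero_apply]
          positivity
      _ = _ := by
          rw [integral_add ((hpf.const_mul _).fun_add (hf.const_mul _)) hinv,
            integral_add (hpf.const_mul _) (hf.const_mul _), integral_const_mul,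
            integral_const_mul]
          ring
  have hdiscrim := discrim_le_zero hquadratic
  rw [discrim] at hdiscrim
  linarith

lemma intervalIntegrable_inv_pow {a b : ℝ} (ha : 0 < a) (hb : 0 < b) (n : ℕ) :
    IntervalIntegrable (fun t : ℝ => (t ^ n)⁻¹) volume a b :=
  ((continuousOn_pow n).inv₀ fun _ ht =>
    (pow_pos ((lt_min ha hb).trans_le ht.1) n).ne').intervalIntegrable

lemma integral_inv_pow_succ_le (m : ℕ) {x : ℝ} (hx : x ∈ Ioc (0 : ℝ) 1) :
    ∫ t in x..1, (t ^ (m + 1))⁻¹ ≤ (x ^ m)⁻¹ * -Real.log x := by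
  have hinv : IntervalIntegrable (fun t : ℝ => t⁻¹) volume x 1 := by
    simpa only [pow_one] using intervalIntegrable_inv_pow hx.1 one_pos 1
  calc ∫ t in x..1, (t ^ (m + 1))⁻¹ ≤ ∫ t in x..1, (x ^ m)⁻¹ * t⁻¹ := by
        refine intervalIntegral.integral_mono_on hx.2
          (intervalIntegrable_inv_pow hx.1 one_pos _) (hinv.const_mul _) fun t ht => ?_
        have htpos : 0 < t := hx.1.trans_le ht.1
        have hxm : 0 < x ^ m := pow_pos hx.1 m
        rw [pow_succ, mul_inv]
        gcongr
        · exact hx.1.le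
        · exact ht.1
    _ = (x ^ m)⁻¹ * -Real.log x := by
        rw [intervalIntegral.integral_const_mul, integral_inv_of_pos hx.1 one_pos, one_div,
          Real.log_inv]

lemma tendsto_div_of_hasDerivAt {f g : ℝ → ℝ} {a f' g' : ℝ} (hf : HasDerivAt f f' a)
    (hg : HasDerivAt g g' a) (hfa : f a = 0) (hga : g a = 0) (hg' : g' ≠ 0) :
    Tendsto (fun x => f x / g x) (𝓝[≠] a) (𝓝 (f' / g')) := by
  refine (hf.tendsto_slope.div hg.tendsto_slope hg').congr' ?_
  filter_upwards [self_mem_nhdsWithin] with x hx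
  rw [Pi.div_apply, slope_def_field, slope_def_field, hfa, hga, sub_zero, sub_zero,
    div_div_div_cancel_right₀ (sub_ne_zero.2 hx)]

/-- The tail of the energy integral, which controls `q` at both endpoints. -/
noncomputable def energyTail (m : ℕ) (f : ℝ → ℝ) (x : ℝ) : ℝ :=
  ∫ t in x..1, t ^ (m + 1) * f t ^ 2

namespace GPYAdmissible

variable {k m : ℕ} {q f u v : ℝ → ℝ} {x : ℝ}

lemma locallyAbsolutelyContinuousOn (h : GPYAdmissible k q f) :
    LocallyAbsolutelyContinuousOn q (Ioc 0 1) :=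
  .of_eq_integral h.1 h.2.1

lemma ae_hasDerivAt (h : GPYAdmissible k q f) :
    ∀ᵐ x, x ∈ Ioo (0 : ℝ) 1 → HasDerivAt q (f x) x :=
  ae_hasDerivAt_of_eq_integral h.1 h.2.1

lemma apply_one (h : GPYAdmissible k q f) : q 1 = 0 := by
  rw [h.2.1 1 (right_mem_Ioc.2 one_pos), intervalIntegral.integral_same, neg_zero]

lemma integrableOn_energy (h : GPYAdmissible (m + 2) q f) :
    IntegrableOn (fun x => x ^ (m + 1) * f x ^ 2) (Ioc 0 1) :=
  h.2.2.1

lemma energy_pos (h : GPYAdmissible (m + 2) q f) :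
    0 < ∫ x in Ioc (0 : ℝ) 1, x ^ (m + 1) * f x ^ 2 :=
  h.2.2.2

lemma pow_mul_sq_le (h : GPYAdmissible (m + 2) q f) (hx : x ∈ Ioc (0 : ℝ) 1) :
    x ^ m * q x ^ 2 ≤ energyTail m f x * -Real.log x := by
  have hxm : 0 < x ^ m := pow_pos hx.1 m
  have hsub : Ioc x 1 ⊆ Ioc 0 1 := Ioc_subset_Ioc_left hx.1.le
  have hpos : ∀ᵐ t ∂volume.restrict (Ioc x 1), 0 < t ^ (m + 1) :=
    ae_restrict_of_forall_mem measurableSet_Ioc fun t ht => pow_pos (hx.1.trans ht.1) _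
  have hsq : q x ^ 2 ≤ energyTail m f x * ∫ t in x..1, (t ^ (m + 1))⁻¹ := by
    have hcs := sq_integral_le_integral_mul_integral_inv hpos (h.1 x hx).1
      (h.integrableOn_energy.mono_set hsub) (intervalIntegrable_inv_pow hx.1 one_pos (m + 1)).1
    rwa [← intervalIntegral.integral_of_le hx.2, ← intervalIntegral.integral_of_le hx.2,
      ← intervalIntegral.integral_of_le hx.2, ← neg_sq, ← h.2.1 x hx] at hcs
  have htail : 0 ≤ energyTail m f x := intervalIntegral.integral_nonneg hx.2 fun t ht =>
    mul_nonneg (pow_nonneg (hx.1.le.trans ht.1) _) (sq_nonneg _)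
  calc x ^ m * q x ^ 2
      ≤ x ^ m * (energyTail m f x * ((x ^ m)⁻¹ * -Real.log x)) := by
        gcongr
        exact hsq.trans (mul_le_mul_of_nonneg_left (integral_inv_pow_succ_le m hx) htail)
    _ = energyTail m f x * -Real.log x := by field_simp

lemma continuousOn_energyTail (h : GPYAdmissible (m + 2) q f) :
    ContinuousOn (energyTail m f) (Icc 0 1) := by
  have hint : IntegrableOn (fun t => t ^ (m + 1) * f t ^ 2) (uIcc 0 1) := by
    rw [uIcc_of_le zero_le_one]
    exact (integrableOn_Icc_iff_integrableOn_Ioc (by simp)).2 h.integrableOn_energy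
  rw [← uIcc_of_le (zero_le_one' ℝ)]
  exact intervalIntegral.continuousOn_primitive_interval_left hint

lemma integrableOn_mass (h : GPYAdmissible (m + 2) q f) :
    IntegrableOn (fun x => x ^ m * q x ^ 2) (Ioc 0 1) := by
  obtain ⟨K, hK⟩ := isCompact_Icc.exists_bound_of_continuousOn h.continuousOn_energyTail
  have hlog : IntegrableOn (fun x => K * -Real.log x) (Ioc 0 1) :=
    (intervalIntegrable_iff_integrableOn_Ioc_of_le zero_le_one).1
      (intervalIntegral.intervalIntegrable_log'.neg.const_mul K)
  refine hlog.mono' (((continuousOn_pow m).mul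
    (h.locallyAbsolutelyContinuousOn.continuousOn.pow 2)).aestronglyMeasurable
      measurableSet_Ioc) (ae_restrict_of_forall_mem measurableSet_Ioc fun x hx => ?_)
  have hxlog : 0 ≤ -Real.log x := neg_nonneg.2 (Real.log_nonpos hx.1.le hx.2)
  rw [Real.norm_of_nonneg (mul_nonneg (pow_nonneg hx.1.le m) (sq_nonneg _))]
  refine (h.pow_mul_sq_le hx).trans (mul_le_mul_of_nonneg_right ?_ hxlog)
  exact (le_abs_self _).trans (hK x (Ioc_subset_Icc_self hx))

lemma abs_piconeBoundary_le (h : GPYAdmissible (m + 2) q f) (hx : x ∈ Ioo (0 : ℝ) 1) :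
    |piconeBoundary (· ^ (m + 1)) u v q x| ≤
      |v x / u x * (energyTail m f x * Real.negMulLog x)| := by
  have hbound : |x * (x ^ m * q x ^ 2)| ≤ |energyTail m f x * Real.negMulLog x| := by
    rw [abs_of_nonneg (mul_nonneg hx.1.le (mul_nonneg (pow_nonneg hx.1.le m) (sq_nonneg _)))]
    refine le_trans ?_ (le_abs_self _)
    have hmul := mul_le_mul_of_nonneg_left (h.pow_mul_sq_le (Ioo_subset_Ioc_self hx)) hx.1.le
    rw [Real.negMulLog]
    linarith
  calc |piconeBoundary (· ^ (m + 1)) u v q x|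
      = |v x / u x| * |x * (x ^ m * q x ^ 2)| := by
        rw [piconeBoundary, ← abs_mul, pow_succ]
        congr 1
        ring
    _ ≤ _ := by
        rw [abs_mul (v x / u x)]
        gcongr

lemma tendsto_piconeBoundary_zero (h : GPYAdmissible (m + 2) q f) (hu : ContinuousAt u 0)
    (hv : ContinuousAt v 0) (hu0 : u 0 ≠ 0) :
    Tendsto (piconeBoundary (· ^ (m + 1)) u v q) (𝓝[>] 0) (𝓝 0) := by
  have htail : Tendsto (energyTail m f) (𝓝[>] 0) (𝓝 (energyTail m f 0)) :=
    ((h.continuousOn_energyTail 0 (left_mem_Icc.2 zero_le_one)).mono_of_mem_nhdsWithin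
      (mem_of_superset (Ioo_mem_nhdsGT one_pos) Ioo_subset_Icc_self)).tendsto
  have hlog : Tendsto Real.negMulLog (𝓝[>] 0) (𝓝 0) := by
    simpa only [Real.negMulLog_zero] using
      (Real.continuous_negMulLog.tendsto 0).mono_left nhdsWithin_le_nhds
  have hratio := (hv.div hu hu0).tendsto.mono_left (nhdsWithin_le_nhds (s := Ioi 0))
  have hlim := (hratio.mul (htail.mul hlog)).abs
  rw [mul_zero, mul_zero, abs_zero] at hlim
  refine squeeze_zero_norm' ?_ hlim
  filter_upwards [Ioo_mem_nhdsGT one_pos] with x hx using h.abs_piconeBoundary_le hx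

lemma tendsto_piconeBoundary_one (h : GPYAdmissible (m + 2) q f) (hu : HasDerivAt u (v 1) 1)
    (hv : ContinuousAt v 1) (hu1 : u 1 = 0) (hv1 : v 1 ≠ 0) :
    Tendsto (piconeBoundary (· ^ (m + 1)) u v q) (𝓝[<] 1) (𝓝 0) := by
  have htail : Tendsto (energyTail m f) (𝓝[<] 1) (𝓝 0) := by
    have hcont := (h.continuousOn_energyTail 1 (right_mem_Icc.2 zero_le_one)).mono_of_mem_nhdsWithin
      (mem_of_superset (Ioo_mem_nhdsLT one_pos) Ioo_subset_Icc_self)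
    simpa only [energyTail, intervalIntegral.integral_same] using hcont.tendsto
  have hratio := (tendsto_div_of_hasDerivAt (Real.hasDerivAt_negMulLog one_ne_zero) hu
    Real.negMulLog_one hu1 hv1).mono_left (nhdsWithin_mono 1 fun _ => ne_of_lt)
  have hlim := ((hv.tendsto.mono_left nhdsWithin_le_nhds).mul (htail.mul hratio)).abs
  rw [zero_mul, mul_zero, abs_zero] at hlim
  refine squeeze_zero_norm' ?_ hlim
  filter_upwards [Ioo_mem_nhdsLT one_pos] with x hx
  refine (h.abs_piconeBoundary_le hx).trans_eq ?_
  congr 1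
  ring

end GPYAdmissible

end Energy

section BesselClifford

open scoped Nat

/-- The Bessel–Clifford function `C_m(y) = ∑ y^j / (j! (m + j)!)`, the entire function such that
`J_m(x) = (x/2)^m C_m(-x²/4)`. -/
noncomputable def besselClifford (m : ℕ) (y : ℝ) : ℝ :=
  ∑' j : ℕ, y ^ j / (j ! * (m + j)!)

variable (m : ℕ) (x y : ℝ)

lemma summable_besselClifford : Summable fun j : ℕ => y ^ j / (j ! * (m + j)! : ℝ) := by
  refine .of_norm_bounded (Real.summable_pow_div_factorial |y|) fun j => ?_
  have hfac : (1 : ℝ) ≤ (m + j)! := mod_cast (m + j).factorial_pos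
  rw [norm_div, norm_pow, Real.norm_eq_abs, Real.norm_of_nonneg (by positivity)]
  gcongr
  exact le_mul_of_one_le_right (by positivity) hfac

lemma hasSum_besselClifford_succ :
    HasSum (fun j : ℕ => j * y ^ (j - 1) / (j ! * (m + j)! : ℝ)) (besselClifford (m + 1) y) := by
  rw [← hasSum_nat_add_iff' 1, Finset.sum_range_one, Nat.cast_zero, zero_mul, zero_div, sub_zero]
  refine (summable_besselClifford (m + 1) y).hasSum.congr_fun fun j => ?_
  rw [Nat.factorial_succ, add_tsub_cancel_right, add_right_comm, add_assoc]
  push_cast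
  field_simp

theorem hasDerivAt_besselClifford :
    HasDerivAt (besselClifford m) (besselClifford (m + 1) y) y := by
  rw [← (hasSum_besselClifford_succ m y).tsum_eq]
  refine hasDerivAt_tsum_of_isPreconnected (hasSum_besselClifford_succ m (|y| + 1)).summable
    Metric.isOpen_ball (convex_ball (0 : ℝ) (|y| + 1)).isPreconnected
    (fun j z _ => (hasDerivAt_pow j z).div_const _) (fun j z hz => ?_)
    (Metric.mem_ball_self (by positivity)) (summable_besselClifford m 0) (by simp)
  have hz' : |z| ≤ |y| + 1 := (mem_ball_zero_iff.1 hz).le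
  rw [norm_div, norm_mul, norm_pow, Real.norm_natCast, Real.norm_eq_abs,
    Real.norm_of_nonneg (by positivity)]
  gcongr

theorem besselClifford_eq :
    besselClifford m y = (m + 1) * besselClifford (m + 1) y + y * besselClifford (m + 2) y := by
  refine HasSum.tsum_eq ((((summable_besselClifford (m + 1) y).hasSum.mul_left ((m : ℝ) + 1)).add
    ((hasSum_besselClifford_succ (m + 1) y).mul_left y)).congr_fun fun j => ?_)
  have hpow : y * (j * y ^ (j - 1)) = j * y ^ j := by
    rcases eq_or_ne j 0 with rfl | hj
    · simp
    · rw [mul_left_comm, mul_pow_sub_one hj]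
  rw [← mul_div_assoc y, hpow, add_right_comm, Nat.factorial_succ (m + j)]
  push_cast
  field_simp
  ring

lemma besselClifford_zero : besselClifford m 0 = 1 / m ! := by
  rw [besselClifford, tsum_eq_single 0 fun j hj => by rw [zero_pow hj, zero_div]]
  simp

theorem besselJ_eq : besselJ m x = (x / 2) ^ m * besselClifford m (-(x / 2) ^ 2) := by
  rw [besselJ, besselClifford, ← tsum_mul_left]
  refine tsum_congr fun j => ?_
  rw [pow_add, pow_mul, neg_pow ((x / 2) ^ 2)]
  ring

lemma besselJ_eq_zero_iff {x : ℝ} (hx : x ≠ 0) :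
    besselJ m x = 0 ↔ besselClifford m (-(x / 2) ^ 2) = 0 := by
  rw [besselJ_eq, mul_eq_zero_iff_left (pow_ne_zero m (div_ne_zero hx two_ne_zero))]

lemma isLeast_besselClifford_zero {α : ℝ}
    (hα : IsLeast {β | 0 < β ∧ besselJ m β = 0} α) :
    IsLeast {y | 0 < y ∧ besselClifford m (-y) = 0} (α ^ 2 / 4) := by
  obtain ⟨⟨hpos, hzero⟩, hmin⟩ := hα
  refine ⟨⟨by positivity, ?_⟩, fun y ⟨hy, hy0⟩ => ?_⟩
  · rw [besselJ_eq_zero_iff m hpos.ne'] at hzero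
    convert hzero using 3
    ring
  · have hsqrt : 0 < 2 * √y := by positivity
    have hle : α ≤ 2 * √y := hmin ⟨hsqrt, by
      rwa [besselJ_eq_zero_iff m hsqrt.ne', mul_div_cancel_left₀ _ two_ne_zero, Real.sq_sqrt hy.le]⟩
    calc α ^ 2 / 4 ≤ (2 * √y) ^ 2 / 4 := by gcongr
      _ = y := by rw [mul_pow, Real.sq_sqrt hy.le]; ring

end BesselClifford

section Extremal

variable {m : ℕ} {lam x : ℝ} {q f : ℝ → ℝ}

/-- The solution `u(x) = C_m(-λx)`, regular at the origin, of the Euler–Lagrange equation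
`(x^(m+1) u')' = -λ x^m u` of the extremal problem. -/
noncomputable def gpyEigenfunction (m : ℕ) (lam x : ℝ) : ℝ :=
  besselClifford m (-(lam * x))

/-- The derivative of `gpyEigenfunction`, in the closed form given by `C_m' = C_{m+1}`. -/
noncomputable def gpyEigenfunctionDeriv (m : ℕ) (lam x : ℝ) : ℝ :=
  -lam * besselClifford (m + 1) (-(lam * x))

lemma hasDerivAt_gpyEigenfunction (m : ℕ) (lam x : ℝ) :
    HasDerivAt (gpyEigenfunction m lam) (gpyEigenfunctionDeriv m lam x) x := by
  refine ((hasDerivAt_besselClifford m (-(lam * x))).comp x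
    ((hasDerivAt_id x).const_mul lam).fun_neg).congr_deriv ?_
  rw [gpyEigenfunctionDeriv]
  ring

lemma continuous_gpyEigenfunction (m : ℕ) (lam : ℝ) : Continuous (gpyEigenfunction m lam) :=
  continuous_iff_continuousAt.2 fun x => (hasDerivAt_gpyEigenfunction m lam x).continuousAt

lemma continuous_gpyEigenfunctionDeriv (m : ℕ) (lam : ℝ) :
    Continuous (gpyEigenfunctionDeriv m lam) :=
  (continuous_gpyEigenfunction (m + 1) lam).const_mul (-lam)

lemma hasDerivAt_pow_mul_gpyEigenfunctionDeriv (m : ℕ) (lam x : ℝ) :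
    HasDerivAt (fun x => x ^ (m + 1) * gpyEigenfunctionDeriv m lam x)
      (-(lam * x ^ m * gpyEigenfunction m lam x)) x := by
  refine ((hasDerivAt_pow (m + 1) x).fun_mul
    ((hasDerivAt_gpyEigenfunction (m + 1) lam x).const_mul (-lam))).congr_deriv ?_
  rw [gpyEigenfunction, gpyEigenfunction, gpyEigenfunctionDeriv, besselClifford_eq m,
    add_tsub_cancel_right]
  push_cast
  ring

lemma gpyEigenfunction_one (hlam : IsLeast {y | 0 < y ∧ besselClifford m (-y) = 0} lam) :
    gpyEigenfunction m lam 1 = 0 := by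
  rw [gpyEigenfunction, mul_one, hlam.1.2]

lemma gpyEigenfunction_pos (hlam : IsLeast {y | 0 < y ∧ besselClifford m (-y) = 0} lam)
    (hx : x ∈ Ico (0 : ℝ) 1) : 0 < gpyEigenfunction m lam x := by
  have hzero : 0 < gpyEigenfunction m lam 0 := by
    rw [gpyEigenfunction, mul_zero, neg_zero, besselClifford_zero]
    positivity
  by_contra! hneg
  obtain ⟨z, hz, hz0⟩ := intermediate_value_Icc' hx.1
    (continuous_gpyEigenfunction m lam).continuousOn ⟨hneg, hzero.le⟩
  have hzpos : 0 < z := hz.1.lt_of_ne fun h => hzero.ne' (h ▸ hz0)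
  have hle : lam ≤ lam * z := hlam.2 ⟨mul_pos hlam.1.1 hzpos, hz0⟩
  exact (mul_lt_of_lt_one_right hlam.1.1 (hz.2.trans_lt hx.2)).not_ge hle

lemma gpyEigenfunctionDeriv_neg (hlam : IsLeast {y | 0 < y ∧ besselClifford m (-y) = 0} lam)
    (hx : x ∈ Ioc (0 : ℝ) 1) : gpyEigenfunctionDeriv m lam x < 0 := by
  have hanti : StrictAntiOn (fun x => x ^ (m + 1) * gpyEigenfunctionDeriv m lam x) (Icc 0 1) := by
    refine strictAntiOn_of_deriv_neg (convex_Icc 0 1)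
      ((continuous_pow _).mul (continuous_gpyEigenfunctionDeriv m lam)).continuousOn fun y hy => ?_
    rw [interior_Icc] at hy
    rw [(hasDerivAt_pow_mul_gpyEigenfunctionDeriv m lam y).deriv, neg_neg_iff_pos]
    exact mul_pos (mul_pos hlam.1.1 (pow_pos hy.1 m)) (gpyEigenfunction_pos hlam ⟨hy.1.le, hy.2⟩)
  have hflux : x ^ (m + 1) * gpyEigenfunctionDeriv m lam x < 0 := by
    simpa only [zero_pow m.succ_ne_zero, zero_mul] using
      hanti (left_mem_Icc.2 zero_le_one) (Ioc_subset_Icc_self hx) hx.1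
  exact neg_of_mul_neg_right hflux (pow_pos hx.1 _).le

lemma isPositiveSturmLiouvilleSolution_gpyEigenfunction
    (hlam : IsLeast {y | 0 < y ∧ besselClifford m (-y) = 0} lam) :
    IsPositiveSturmLiouvilleSolution (· ^ (m + 1)) (· ^ m) lam 0 1 (gpyEigenfunction m lam)
      (gpyEigenfunctionDeriv m lam) where
  continuousOn_p := continuousOn_pow _
  continuousOn_w := continuousOn_pow _
  p_pos _ hx := pow_pos hx.1 _
  pos _ hx := gpyEigenfunction_pos hlam (Ioo_subset_Ico_self hx)
  hasDerivAt _ _ := hasDerivAt_gpyEigenfunction m lam _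
  hasDerivAt_flux _ _ := hasDerivAt_pow_mul_gpyEigenfunctionDeriv m lam _

lemma gpyAdmissible_gpyEigenfunction
    (hlam : IsLeast {y | 0 < y ∧ besselClifford m (-y) = 0} lam) :
    GPYAdmissible (m + 2) (gpyEigenfunction m lam) (gpyEigenfunctionDeriv m lam) := by
  have hderiv := continuous_gpyEigenfunctionDeriv m lam
  have henergy : Continuous fun x => x ^ (m + 1) * gpyEigenfunctionDeriv m lam x ^ 2 :=
    (continuous_pow _).mul (hderiv.pow 2)
  refine ⟨fun x _ => hderiv.intervalIntegrable _ _, fun x _ => ?_, henergy.integrableOn_Ioc, ?_⟩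
  · rw [intervalIntegral.integral_eq_sub_of_hasDerivAt
      (fun y _ => hasDerivAt_gpyEigenfunction m lam y) (hderiv.intervalIntegrable _ _),
      gpyEigenfunction_one hlam, zero_sub, neg_neg]
  · rw [← intervalIntegral.integral_of_le zero_le_one]
    refine intervalIntegral.intervalIntegral_pos_of_pos_on (henergy.intervalIntegrable _ _)
      (fun x hx => mul_pos (pow_pos hx.1 _) (sq_pos_of_neg ?_)) one_pos
    exact gpyEigenfunctionDeriv_neg hlam (Ioo_subset_Ioc_self hx)

lemma gpyRatio_add_two (m : ℕ) (q f : ℝ → ℝ) :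
    GPYRatio (m + 2) q f = (m + 1) * (∫ x in Ioo (0 : ℝ) 1, x ^ m * q x ^ 2) /
      ∫ x in Ioo (0 : ℝ) 1, x ^ (m + 1) * f x ^ 2 := by
  rw [← integral_Ioc_eq_integral_Ioo, ← integral_Ioc_eq_integral_Ioo, GPYRatio]
  push_cast
  rw [add_sub_assoc]
  norm_num

namespace GPYAdmissible

lemma isPiconeTestFunction (h : GPYAdmissible (m + 2) q f)
    (hlam : IsLeast {y | 0 < y ∧ besselClifford m (-y) = 0} lam) :
    IsPiconeTestFunction (· ^ (m + 1)) (· ^ m) (gpyEigenfunction m lam)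
      (gpyEigenfunctionDeriv m lam) 0 1 q f where
  locallyAbsolutelyContinuousOn := h.locallyAbsolutelyContinuousOn.mono Ioo_subset_Ioc_self
  ae_hasDerivAt := h.ae_hasDerivAt
  integrableOn_energy := h.integrableOn_energy.mono_set Ioo_subset_Ioc_self
  integrableOn_mass := h.integrableOn_mass.mono_set Ioo_subset_Ioc_self
  tendsto_left := h.tendsto_piconeBoundary_zero (continuous_gpyEigenfunction m lam).continuousAt
    (continuous_gpyEigenfunctionDeriv m lam).continuousAt
    (gpyEigenfunction_pos hlam (left_mem_Ico.2 one_pos)).ne'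
  tendsto_right := h.tendsto_piconeBoundary_one (hasDerivAt_gpyEigenfunction m lam 1)
    (continuous_gpyEigenfunctionDeriv m lam).continuousAt (gpyEigenfunction_one hlam)
    (gpyEigenfunctionDeriv_neg hlam (right_mem_Ioc.2 one_pos)).ne

lemma gpyRatio_le (h : GPYAdmissible (m + 2) q f)
    (hlam : IsLeast {y | 0 < y ∧ besselClifford m (-y) = 0} lam) :
    GPYRatio (m + 2) q f ≤ (m + 1) / lam := by
  have henergy := h.energy_pos
  rw [integral_Ioc_eq_integral_Ioo] at henergy
  have hpicone := (isPositiveSturmLiouvilleSolution_gpyEigenfunction hlam).mul_integral_le one_pos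
    (h.isPiconeTestFunction hlam)
  rw [gpyRatio_add_two, div_le_div_iff₀ henergy hlam.1.1, mul_assoc, mul_comm _ lam]
  gcongr

lemma gpyRatio_eq_iff (h : GPYAdmissible (m + 2) q f)
    (hlam : IsLeast {y | 0 < y ∧ besselClifford m (-y) = 0} lam) :
    GPYRatio (m + 2) q f = (m + 1) / lam ↔
      ∃ c ≠ 0, ∀ x ∈ Ioc (0 : ℝ) 1, q x = c * gpyEigenfunction m lam x := by
  have henergy := h.energy_pos
  rw [integral_Ioc_eq_integral_Ioo] at henergy
  have hpicone := (isPositiveSturmLiouvilleSolution_gpyEigenfunction hlam).integral_eq_mul_iff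
    one_pos (h.isPiconeTestFunction hlam)
  have hratio : GPYRatio (m + 2) q f = (m + 1) / lam ↔ ∫ x in Ioo (0 : ℝ) 1, x ^ (m + 1) * f x ^ 2 =
      lam * ∫ x in Ioo (0 : ℝ) 1, x ^ m * q x ^ 2 := by
    have hm : (m + 1 : ℝ) ≠ 0 := by positivity
    rw [gpyRatio_add_two, div_eq_div_iff henergy.ne' hlam.1.1.ne', mul_assoc, mul_right_inj' hm,
      mul_comm _ lam, eq_comm]
  rw [hratio, hpicone]
  refine ⟨fun ⟨c, hc⟩ => ⟨c, ?_, fun x hx => ?_⟩, fun ⟨c, _, hc⟩ =>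
    ⟨c, fun x hx => hc x (Ioo_subset_Ioc_self hx)⟩⟩
  · rintro rfl
    have hmass : ∫ x in Ioo (0 : ℝ) 1, x ^ m * q x ^ 2 = 0 :=
      setIntegral_eq_zero_of_forall_eq_zero fun x hx => by
        rw [hc x hx, zero_mul, zero_pow two_ne_zero, mul_zero]
    exact henergy.ne' ((hpicone.2 ⟨0, hc⟩).trans (by rw [hmass, mul_zero]))
  · rcases hx.2.eq_or_lt with rfl | hx1
    · rw [h.apply_one, gpyEigenfunction_one hlam, mul_zero]
    · exact hc x ⟨hx.1, hx1⟩

end GPYAdmissible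

lemma gpyRatio_gpyEigenfunction (hlam : IsLeast {y | 0 < y ∧ besselClifford m (-y) = 0} lam) :
    GPYRatio (m + 2) (gpyEigenfunction m lam) (gpyEigenfunctionDeriv m lam) = (m + 1) / lam :=
  ((gpyAdmissible_gpyEigenfunction hlam).gpyRatio_eq_iff hlam).2
    ⟨1, one_ne_zero, fun _ _ => (one_mul _).symm⟩

theorem isGreatest_gpyRatio (hlam : IsLeast {y | 0 < y ∧ besselClifford m (-y) = 0} lam) :
    IsGreatest {r | ∃ q q', GPYAdmissible (m + 2) q q' ∧ r = GPYRatio (m + 2) q q'}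
      ((m + 1) / lam) := by
  refine ⟨⟨_, _, gpyAdmissible_gpyEigenfunction hlam, (gpyRatio_gpyEigenfunction hlam).symm⟩, ?_⟩
  rintro _ ⟨q, q', h, rfl⟩
  exact h.gpyRatio_le hlam

lemma rpow_mul_besselJ_eq (m : ℕ) (α : ℝ) (hx : 0 < x) :
    x ^ (-(m : ℝ) / 2) * besselJ m (α * √x) =
      (α / 2) ^ m * gpyEigenfunction m (α ^ 2 / 4) x := by
  have hexp : -(m : ℝ) / 2 + 1 / 2 * m = 0 := by ring
  have hpow : x ^ (-(m : ℝ) / 2) * √x ^ m = 1 := by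
    rw [Real.sqrt_eq_rpow, ← Real.rpow_mul_natCast hx.le, ← Real.rpow_add hx, hexp,
      Real.rpow_zero]
  have harg : (α * √x / 2) ^ 2 = α ^ 2 / 4 * x := by
    rw [div_pow, mul_pow, Real.sq_sqrt hx.le]
    ring
  rw [besselJ_eq, harg, gpyEigenfunction, mul_div_right_comm, mul_pow]
  linear_combination (α / 2) ^ m * besselClifford m (-(α ^ 2 / 4 * x)) * hpow

lemma exists_ne_zero_eq_const_mul_congr {u g : ℝ → ℝ} {s : Set ℝ} {A : ℝ} (hA : A ≠ 0)
    (hg : ∀ x ∈ s, g x = A * u x) :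
    (∃ c ≠ 0, ∀ x ∈ s, q x = c * u x) ↔ ∃ c ≠ 0, ∀ x ∈ s, q x = c * g x := by
  constructor
  · rintro ⟨c, hc, hq⟩
    refine ⟨c / A, div_ne_zero hc hA, fun x hx => ?_⟩
    rw [hq x hx, hg x hx, ← mul_assoc, div_mul_cancel₀ c hA]
  · rintro ⟨c, hc, hq⟩
    refine ⟨c * A, mul_ne_zero hc hA, fun x hx => ?_⟩
    rw [hq x hx, hg x hx, mul_assoc]

end Extremal

theorem gpy_extremal_value_and_maximizer_general (k : ℕ) (hk : 2 ≤ k)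
    (α : ℝ) (hα_pos : 0 < α) (hα_zero : besselJ (k - 2) α = 0)
    (hα_min : ∀ β : ℝ, 0 < β → besselJ (k - 2) β = 0 → α ≤ β)
    (S : ℝ)
    (hS : S = sSup {r : ℝ | ∃ q q' : ℝ → ℝ, GPYAdmissible k q q' ∧ r = GPYRatio k q q'})
    (q₁ : ℝ → ℝ)
    (hq₁ : q₁ = fun x => x ^ (-((k : ℝ) - 2) / 2) * besselJ (k - 2) (α * √x)) :
    S = 4 * ((k : ℝ) - 1) / α ^ 2 ∧
    (∃ q q' : ℝ → ℝ, GPYAdmissible k q q' ∧ GPYRatio k q q' = S) ∧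
    (∀ q q' : ℝ → ℝ, GPYAdmissible k q q' →
      (GPYRatio k q q' = S ↔ ∃ c : ℝ, c ≠ 0 ∧ ∀ x ∈ Ioc (0 : ℝ) 1, q x = c * q₁ x)) ∧
    (∀ x ∈ Ioo (0 : ℝ) 1, 0 < q₁ x) := by
  obtain ⟨m, rfl⟩ := Nat.exists_eq_add_of_le' hk
  have hlam := isLeast_besselClifford_zero m ⟨⟨hα_pos, hα_zero⟩, fun β hβ => hα_min β hβ.1 hβ.2⟩
  have hA : 0 < (α / 2) ^ m := by positivity
  have hq₁_eq (x : ℝ) (hx : 0 < x) : q₁ x = (α / 2) ^ m * gpyEigenfunction m (α ^ 2 / 4) x := by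
    rw [hq₁, ← rpow_mul_besselJ_eq m α hx, Nat.cast_add, Nat.cast_two, add_sub_cancel_right,
      Nat.add_sub_cancel]
  rw [(isGreatest_gpyRatio hlam).csSup_eq] at hS
  subst hS
  refine ⟨?_, ⟨_, _, gpyAdmissible_gpyEigenfunction hlam, gpyRatio_gpyEigenfunction hlam⟩,
    fun q q' h => ?_, fun x hx => ?_⟩
  · push_cast
    field_simp
    ring
  · rw [h.gpyRatio_eq_iff hlam]
    exact exists_ne_zero_eq_const_mul_congr hA.ne' fun x hx => hq₁_eq x hx.1
  · rw [hq₁_eq x hx.1]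
    exact mul_pos hA (gpyEigenfunction_pos hlam (Ioo_subset_Ico_self hx))

/-- Let `k ≥ 3`, `m := k-2`, and let `α` be the smallest positive zero
of the Bessel function `J_m`.  Then the supremum `S(k)` of the GPY ratios over the
admissible class equals `4(k-1)/α²`, the supremum is attained, and the maximizers are
exactly the nonzero constant multiples of `q₁(x) := x^(-m/2) J_m(α √x)`, which is
strictly positive on `(0,1)`. -/
theorem gpy_extremal_value_and_maximizer (k : ℕ) (hk : 3 ≤ k)
    (α : ℝ) (hα_pos : 0 < α) (hα_zero : besselJ (k - 2) α = 0)
    (hα_min : ∀ β : ℝ, 0 < β → besselJ (k - 2) β = 0 → α ≤ β)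
    (S : ℝ)
    (hS : S = sSup {r : ℝ | ∃ q q' : ℝ → ℝ, GPYAdmissible k q q' ∧ r = GPYRatio k q q'})
    (q₁ : ℝ → ℝ)
    (hq₁ : q₁ = fun x => x ^ (-((k : ℝ) - 2) / 2) * besselJ (k - 2) (α * Real.sqrt x)) :
    S = 4 * ((k : ℝ) - 1) / α ^ 2 ∧
    (∃ q q' : ℝ → ℝ, GPYAdmissible k q q' ∧ GPYRatio k q q' = S) ∧
    (∀ q q' : ℝ → ℝ, GPYAdmissible k q q' →
      (GPYRatio k q q' = S ↔ ∃ c : ℝ, c ≠ 0 ∧ ∀ x ∈ Set.Ioc (0:ℝ) 1, q x = c * q₁ x)) ∧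
    (∀ x ∈ Set.Ioo (0:ℝ) 1, 0 < q₁ x) :=
  gpy_extremal_value_and_maximizer_general k (by omega) α hα_pos hα_zero hα_min S hS q₁ hq₁
end
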